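/- (Feasibility of the uniform-normalization membership problem.) Let ρ ∈ int K. If x̄ ∈ conv(∪_{h=1}^H {x ∈ ℝⁿ : Ax = b, D_h x − d_h ∈ Q_h}), then the system: Σ_h y_h = x̄, Σ_h z_h = 1, A y_h = z_h b for all h, y_h + ηρ ∈ K and z_h ≥ 0 for all h, D_h y_h − z_h d_h ∈ Q_h for all h, η ≥ 0, has a solution (y, z, η). -/

import Mathlib

open Matrix

/-- A proper cone: closed, convex, closed under nonnegative scaling,
pointed (`K ∩ (−K) = {0}`), with nonempty interior. -/
def IsProperCone {n : ℕ} (K : Set (Fin n → ℝ)) : Prop :=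
  IsClosed K ∧ Convex ℝ K ∧ (∀ x ∈ K, ∀ t : ℝ, 0 ≤ t → t • x ∈ K) ∧
    K ∩ (-K) = {0} ∧ (interior K).Nonempty

/-- The dual cone `K* = {u : uᵀx ≥ 0 for all x ∈ K}`. -/
def dualCone' {n : ℕ} (K : Set (Fin n → ℝ)) : Set (Fin n → ℝ) :=
  {u | ∀ x ∈ K, 0 ≤ u ⬝ᵥ x}

/-!
Homogenizing each disjunctive term with an extra coordinate `t` turns it into the slice `t = 1` of a
pointed cone. The slice `t = 1` of the sum of these cones is convex and contains every term, hence
it contains `x̄`; splitting `(x̄, 1)` into its components in the cones yields all `y h` and `z h`.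
Since `ρ` is interior to `K`, the finitely many conditions `y h + η • ρ ∈ K` hold for large `η`.
-/

section Absorption

open Filter Topology

variable {𝕜 E : Type*} [Field 𝕜] [LinearOrder 𝕜] [IsStrictOrderedRing 𝕜] [TopologicalSpace 𝕜]
  [OrderTopology 𝕜] [AddCommGroup E] [Module 𝕜 E] [TopologicalSpace E] [ContinuousAdd E]
  [ContinuousSMul 𝕜 E]

theorem tendsto_inv_smul_add_atTop (y ρ : E) :
    Tendsto (fun t : 𝕜 => t⁻¹ • y + ρ) atTop (𝓝 ρ) := by
  simpa only [zero_smul, zero_add] using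
    ((tendsto_inv_atTop_zero (𝕜 := 𝕜)).smul_const y).add_const ρ

theorem eventually_add_smul_mem_of_mem_interior {K : Set E}
    (hK : ∀ x ∈ K, ∀ t : 𝕜, 0 < t → t • x ∈ K) {ρ : E} (hρ : ρ ∈ interior K) (y : E) :
    ∀ᶠ t : 𝕜 in atTop, y + t • ρ ∈ K := by
  have h_near : ∀ᶠ t : 𝕜 in atTop, t⁻¹ • y + ρ ∈ K :=
    (tendsto_inv_smul_add_atTop y ρ).eventually_mem (mem_interior_iff_mem_nhds.1 hρ)
  filter_upwards [h_near, eventually_gt_atTop 0] with t h_mem h_pos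
  simpa only [smul_add, smul_inv_smul₀ h_pos.ne'] using hK _ h_mem t h_pos

theorem exists_nonneg_forall_add_smul_mem {ι : Type*} [Finite ι] {K : Set E}
    (hK : ∀ x ∈ K, ∀ t : 𝕜, 0 < t → t • x ∈ K) {ρ : E} (hρ : ρ ∈ interior K) (y : ι → E) :
    ∃ η : 𝕜, 0 ≤ η ∧ ∀ i, y i + η • ρ ∈ K :=
  ((eventually_ge_atTop 0).and <| eventually_all.2 fun i =>
    eventually_add_smul_mem_of_mem_interior hK hρ (y i)).exists

end Absorption

section Slice

variable {𝕜 E : Type*} [Ring 𝕜] [PartialOrder 𝕜] [IsOrderedRing 𝕜] [AddCommGroup E] [Module 𝕜 E]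

theorem convex_setOf_prodMk_one_mem (C : PointedCone 𝕜 (E × 𝕜)) :
    Convex 𝕜 {x : E | (x, (1 : 𝕜)) ∈ C} := by
  intro x hx y hy a b ha hb hab
  simpa [hab] using C.convex hx hy ha hb hab

theorem prodMk_one_mem_iSup_of_mem_convexHull_iUnion {ι : Sort*} {C : ι → PointedCone 𝕜 (E × 𝕜)}
    {x : E} (hx : x ∈ convexHull 𝕜 (⋃ i, {x : E | (x, (1 : 𝕜)) ∈ C i})) :
    (x, (1 : 𝕜)) ∈ ⨆ i, C i :=
  convexHull_min (t := {x : E | (x, (1 : 𝕜)) ∈ ⨆ i, C i})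
    (Set.iUnion_subset fun i _ hxi => le_iSup C i hxi) (convex_setOf_prodMk_one_mem _) hx

end Slice

section Supremum

variable {ι R M : Type*} [Fintype ι] [Semiring R] [AddCommMonoid M] [Module R M]

theorem exists_sum_eq_of_mem_iSup {p : ι → Submodule R M} {x : M} (hx : x ∈ ⨆ i, p i) :
    ∃ w : ι → M, (∀ i, w i ∈ p i) ∧ ∑ i, w i = x := by
  obtain ⟨w, hw, hsum⟩ := (Submodule.mem_iSup_iff_exists_finsupp p x).1 hx
  exact ⟨w, hw, by rwa [Finsupp.sum_fintype _ _ fun _ => rfl] at hsum⟩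

end Supremum

section Homogenization

variable {𝕜 E F : Type*} [CommRing 𝕜] [PartialOrder 𝕜] [IsOrderedRing 𝕜]
  [AddCommGroup E] [Module 𝕜 E] [AddCommGroup F] [Module 𝕜 F]

/-- The homogenization `{(y, t) | L y - t • c ∈ C ∧ 0 ≤ t}` of the conic constraint `L x - c ∈ C`,
whose solution set is the slice `t = 1`; it turns convex combinations of solutions into sums. -/
def homogenization (L : E →ₗ[𝕜] F) (c : F) (C : PointedCone 𝕜 F) : PointedCone 𝕜 (E × 𝕜) :=
  C.comap (L.coprod (-LinearMap.toSpanSingleton 𝕜 F c)) ⊓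
    (PointedCone.positive 𝕜 𝕜).comap (LinearMap.snd 𝕜 E 𝕜)

theorem mem_homogenization {L : E →ₗ[𝕜] F} {c : F} {C : PointedCone 𝕜 F} {w : E × 𝕜} :
    w ∈ homogenization L c C ↔ L w.1 - w.2 • c ∈ C ∧ 0 ≤ w.2 := by
  simp [homogenization, sub_eq_add_neg]

theorem prodMk_one_mem_homogenization {L : E →ₗ[𝕜] F} {c : F} {C : PointedCone 𝕜 F} {x : E} :
    (x, (1 : 𝕜)) ∈ homogenization L c C ↔ L x - c ∈ C := by
  simp [mem_homogenization]

end Homogenization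

section Disjunction

variable {ι 𝕜 E F : Type*} {G : ι → Type*} [Fintype ι]
  [AddCommGroup E] [AddCommGroup F] [∀ i, AddCommGroup (G i)]

theorem exists_disaggregation_of_mem_convexHull_iUnion [CommRing 𝕜] [PartialOrder 𝕜]
    [IsOrderedRing 𝕜] [Module 𝕜 E] [Module 𝕜 F] [∀ i, Module 𝕜 (G i)]
    {A : E →ₗ[𝕜] F} {b : F} {D : ∀ i, E →ₗ[𝕜] G i} {d : ∀ i, G i} {Q : ∀ i, PointedCone 𝕜 (G i)}
    {x : E} (hx : x ∈ convexHull 𝕜 (⋃ i, {x : E | A x = b ∧ D i x - d i ∈ Q i})) :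
    ∃ (y : ι → E) (z : ι → 𝕜), ∑ i, y i = x ∧ ∑ i, z i = 1 ∧ (∀ i, A (y i) = z i • b) ∧
      (∀ i, 0 ≤ z i) ∧ ∀ i, D i (y i) - z i • d i ∈ Q i := by
  let C (i : ι) : PointedCone 𝕜 (E × 𝕜) := homogenization A b ⊥ ⊓ homogenization (D i) (d i) (Q i)
  have h_slice (i : ι) : {x : E | A x = b ∧ D i x - d i ∈ Q i} = {x : E | (x, (1 : 𝕜)) ∈ C i} := by
    ext x
    simp [C, prodMk_one_mem_homogenization, sub_eq_zero]
  simp only [h_slice] at hx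
  obtain ⟨w, hwC, hsum⟩ :=
    exists_sum_eq_of_mem_iSup (prodMk_one_mem_iSup_of_mem_convexHull_iUnion hx)
  have hwA (i : ι) := mem_homogenization.1 (hwC i).1
  have hwD (i : ι) := mem_homogenization.1 (hwC i).2
  refine ⟨fun i => (w i).1, fun i => (w i).2, ?_, ?_, fun i => sub_eq_zero.1 (hwA i).1,
    fun i => (hwA i).2, fun i => (hwD i).1⟩
  · simpa only [Prod.fst_sum] using congrArg Prod.fst hsum
  · simpa only [Prod.snd_sum] using congrArg Prod.snd hsum

theorem cut_stmt_14_general [Field 𝕜] [LinearOrder 𝕜] [IsStrictOrderedRing 𝕜]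
    [TopologicalSpace 𝕜] [OrderTopology 𝕜] [TopologicalSpace E] [ContinuousAdd E]
    [Module 𝕜 E] [ContinuousSMul 𝕜 E] [Module 𝕜 F] [∀ i, Module 𝕜 (G i)]
    (A : E →ₗ[𝕜] F) (b : F) {K : Set E} (hK : ∀ x ∈ K, ∀ t : 𝕜, 0 < t → t • x ∈ K)
    (D : ∀ i, E →ₗ[𝕜] G i) (d : ∀ i, G i) (Q : ∀ i, PointedCone 𝕜 (G i))
    {ρ : E} (hρ : ρ ∈ interior K) {x : E}
    (hx : x ∈ convexHull 𝕜 (⋃ i, {x : E | A x = b ∧ D i x - d i ∈ Q i})) :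
    ∃ (y : ι → E) (z : ι → 𝕜) (η : 𝕜), ∑ i, y i = x ∧ ∑ i, z i = 1 ∧
      (∀ i, A (y i) = z i • b) ∧ (∀ i, y i + η • ρ ∈ K) ∧ (∀ i, 0 ≤ z i) ∧
      (∀ i, D i (y i) - z i • d i ∈ Q i) ∧ 0 ≤ η := by
  obtain ⟨y, z, hy, hz, hA, hz_nonneg, hD⟩ := exists_disaggregation_of_mem_convexHull_iUnion hx
  obtain ⟨η, hη, hK_mem⟩ := exists_nonneg_forall_add_smul_mem hK hρ y
  exact ⟨y, z, η, hy, hz, hA, hK_mem, hz_nonneg, hD, hη⟩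

end Disjunction

/-- A proper cone as a `PointedCone`, to which the lattice operations on cones apply. -/
def IsProperCone.toPointedCone {n : ℕ} {K : Set (Fin n → ℝ)} (hK : IsProperCone K) :
    PointedCone ℝ (Fin n → ℝ) :=
  .ofConeComb K (hK.2.2.2.2.mono interior_subset) fun x hx y hy a ha b hb => by
    obtain ⟨-, h_convex, h_smul, -⟩ := hK
    have h_mid := h_convex (h_smul x hx a ha) (h_smul y hy b hb)
      one_half_pos.le one_half_pos.le (add_halves 1)
    simpa [smul_smul] using h_smul _ h_mid 2 zero_le_two

/-- Feasibility of the uniform-normalization membership problem when `x̄`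
lies in the convex hull of the (relaxed) disjunctive terms. -/
theorem cut_stmt_14 {m n H : ℕ}
    (A : Matrix (Fin m) (Fin n) ℝ) (b : Fin m → ℝ)
    (K : Set (Fin n → ℝ)) (hK : IsProperCone K)
    (mq : Fin H → ℕ) (D : ∀ h : Fin H, Matrix (Fin (mq h)) (Fin n) ℝ)
    (d : ∀ h : Fin H, Fin (mq h) → ℝ) (Q : ∀ h : Fin H, Set (Fin (mq h) → ℝ))
    (hQ : ∀ h, IsProperCone (Q h))
    (ρ : Fin n → ℝ) (hρ : ρ ∈ interior K)
    (xbar : Fin n → ℝ) (hxbar : A.mulVec xbar = b)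
    (hconv : xbar ∈ convexHull ℝ (⋃ h : Fin H,
      {x : Fin n → ℝ | A.mulVec x = b ∧ (D h).mulVec x - d h ∈ Q h})) :
    ∃ (y : Fin H → Fin n → ℝ) (z : Fin H → ℝ) (η : ℝ),
      (∑ h, y h) = xbar ∧ (∑ h, z h) = 1 ∧
      (∀ h, A.mulVec (y h) = z h • b) ∧
      (∀ h, y h + η • ρ ∈ K) ∧ (∀ h, 0 ≤ z h) ∧
      (∀ h, (D h).mulVec (y h) - z h • d h ∈ Q h) ∧
      0 ≤ η :=
  cut_stmt_14_general A.mulVecLin b (fun x hx t ht => hK.2.2.1 x hx t ht.le)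
    (fun h => (D h).mulVecLin) d (fun h => (hQ h).toPointedCone) hρ hconv
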